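/- Let M be a monoid, I a non-empty set, and S = B(M; I)¹ the Brandt monoid over M. If S is right coherent, then M is right coherent. -/

import Mathlib

def IsRightCongruence {M : Type*} [Monoid M] (r : M → M → Prop) : Prop :=
  Equivalence r ∧ ∀ a b c : M, r a b → r (a * c) (b * c)

def RCongGenBy {M : Type*} [Monoid M] (H : Set (M × M)) (r : M → M → Prop) : Prop :=
  IsRightCongruence r ∧ (∀ p ∈ H, r p.1 p.2) ∧
    ∀ r' : M → M → Prop, IsRightCongruence r' → (∀ p ∈ H, r' p.1 p.2) →
      ∀ x y : M, r x y → r' x y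

def FGRightCongruence {M : Type*} [Monoid M] (r : M → M → Prop) : Prop :=
  ∃ H : Set (M × M), H.Finite ∧ RCongGenBy H r

def RightCoherent (M : Type*) [Monoid M] : Prop :=
  ∀ r : M → M → Prop, FGRightCongruence r → ∀ a b : M,
    (∃ C : Finset M,
      {x : M | (∃ s : M, r x (a * s)) ∧ (∃ t : M, r x (b * t))} =
        ⋃ c ∈ C, {x : M | ∃ s : M, r x (c * s)}) ∧
    FGRightCongruence (fun u v : M => r (a * u) (a * v))

/-!
The `i`-th row of the Brandt monoid, together with `0`, is a right ideal which as a left `M`-act is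
free with zero, and each element of the monoid acts on it by a row-monomial matrix over `M` with
zero. Applying a right congruence `r` on `M` to the `M`-coordinates of the row, and equality
elsewhere, gives a right congruence `R` on the monoid, finitely generated if `r` is. Coherence for
`R` at `(i, a, i)` and `(i, b, i)` restricts to coherence for `r` at `a` and `b`: the generators of
the intersection that are needed lie in the row, and since `(i, a, i) * u` is `(i, 1, i) * u`
multiplied on the left by `a`, the annihilator of `(i, a, i)` modulo `R` is the annihilator of
`(i, 1, i)` modulo the lift of the annihilator of `a`.
-/

section RightCongruence

variable {M S : Type*} [Monoid M] [Monoid S] {r : M → M → Prop}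

theorem IsRightCongruence.comap {R : S → S → Prop} (hR : IsRightCongruence R) {g : M → S}
    (hg : ∀ c, ∃ s, ∀ m, g (m * c) = g m * s) :
    IsRightCongruence fun m n => R (g m) (g n) := by
  refine ⟨hR.1.comap g, fun m n c hmn => ?_⟩
  obtain ⟨s, hs⟩ := hg c
  simpa only [hs] using hR.2 _ _ s hmn

theorem IsRightCongruence.comap_mul_left (hr : IsRightCongruence r) (a : M) :
    IsRightCongruence fun u v => r (a * u) (a * v) :=
  hr.comap fun c => ⟨c, fun m => (mul_assoc a m c).symm⟩

theorem FGRightCongruence.isRightCongruence (hr : FGRightCongruence r) : IsRightCongruence r :=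
  let ⟨_, _, hgen⟩ := hr
  hgen.1

/-- The cyclic subact `(aρ)M` of the right act `M/ρ`, encoded as the union in `M` of its
`ρ`-classes. -/
def cyclicSubact (r : M → M → Prop) (a : M) : Set M :=
  {x | ∃ s, r x (a * s)}

theorem self_mem_cyclicSubact (hr : IsRightCongruence r) (a : M) : a ∈ cyclicSubact r a :=
  ⟨1, by simpa only [mul_one] using hr.1.refl a⟩

theorem cyclicSubact_subset_of_mem (hr : IsRightCongruence r) {a x : M}
    (hx : x ∈ cyclicSubact r a) : cyclicSubact r x ⊆ cyclicSubact r a := by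
  rintro y ⟨t, hyt⟩
  obtain ⟨s, hxs⟩ := hx
  exact ⟨s * t, mul_assoc a s t ▸ hr.1.trans hyt (hr.2 _ _ t hxs)⟩

end RightCongruence

/-- A right ideal `{row m j} ∪ {z}` of `S` that is free with zero `z` as a left `M`-act with basis
`J`, where `row m j` is `m` times the basis element `j`. Each `s : S` acts on it by a row-monomial
`J × J` matrix over `M` with zero, and the basis element `j₀` reaches every `row n k`. The notion
abstracts a row of a Brandt monoid over `M`, with `z` its zero. -/
structure IsMonomialRow {M J S : Type*} [Monoid M] [Monoid S] (row : M → J → S) (z : S) (j₀ : J) :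
    Prop where
  injective2 : Function.Injective2 row
  ne_zero : ∀ m j, row m j ≠ z
  zero_mul : ∀ s, z * s = z
  mul_eq_zero_or_row : ∀ j s,
    (∀ m, row m j * s = z) ∨ ∃ n k, ∀ m, row m j * s = row (m * n) k
  exists_mul_eq_row : ∀ n k, ∃ s, ∀ m, row m j₀ * s = row (m * n) k

/-- The extension to `S` of a relation `r` on `M`: it relates `row m j` to `row n j` when `r m n`,
and is equality otherwise. -/
def RowLift {M J S : Type*} (row : M → J → S) (r : M → M → Prop) (x y : S) : Prop :=
  x = y ∨ ∃ m n j, x = row m j ∧ y = row n j ∧ r m n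

namespace IsMonomialRow

variable {M J S : Type*} [Monoid M] [Monoid S] {row : M → J → S} {z : S} {j₀ : J}
  {r : M → M → Prop} {a b m n x : M} {j k : J}

theorem rowLift_row_row_iff (h : IsMonomialRow row z j₀) (hr : IsRightCongruence r) :
    RowLift row r (row m j) (row n k) ↔ j = k ∧ r m n := by
  constructor
  · rintro (heq | ⟨m', n', j', hm, hn, hmn⟩)
    · obtain ⟨rfl, rfl⟩ := h.injective2 heq
      exact ⟨rfl, hr.1.refl _⟩
    · obtain ⟨rfl, rfl⟩ := h.injective2 hm
      obtain ⟨rfl, rfl⟩ := h.injective2 hn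
      exact ⟨rfl, hmn⟩
  · rintro ⟨rfl, hmn⟩
    exact Or.inr ⟨m, n, j, rfl, rfl, hmn⟩

theorem not_rowLift_row_zero (h : IsMonomialRow row z j₀) : ¬ RowLift row r (row m j) z := by
  rintro (heq | ⟨_, _, _, _, heq, _⟩)
  · exact h.ne_zero _ _ heq
  · exact h.ne_zero _ _ heq.symm

theorem not_rowLift_zero_row (h : IsMonomialRow row z j₀) : ¬ RowLift row r z (row m j) := by
  rintro (heq | ⟨_, _, _, heq, _, _⟩)
  · exact h.ne_zero _ _ heq.symm
  · exact h.ne_zero _ _ heq.symm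

theorem equivalence_rowLift (h : IsMonomialRow row z j₀) (hr : IsRightCongruence r) :
    Equivalence (RowLift row r) where
  refl _ := Or.inl rfl
  symm := by
    rintro x y (rfl | ⟨m, n, j, rfl, rfl, hmn⟩)
    · exact Or.inl rfl
    · exact Or.inr ⟨n, m, j, rfl, rfl, hr.1.symm hmn⟩
  trans := by
    rintro x y w (rfl | ⟨m, n, j, rfl, rfl, hmn⟩) hyw
    · exact hyw
    · rcases hyw with rfl | ⟨n', l, j', hn, rfl, hnl⟩
      · exact Or.inr ⟨m, n, j, rfl, rfl, hmn⟩
      · obtain ⟨rfl, rfl⟩ := h.injective2 hn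
        exact Or.inr ⟨m, l, j, rfl, rfl, hr.1.trans hmn hnl⟩

theorem isRightCongruence_rowLift (h : IsMonomialRow row z j₀) (hr : IsRightCongruence r) :
    IsRightCongruence (RowLift row r) := by
  refine ⟨h.equivalence_rowLift hr, ?_⟩
  rintro x y s (rfl | ⟨m, n, j, rfl, rfl, hmn⟩)
  · exact Or.inl rfl
  · rcases h.mul_eq_zero_or_row j s with hs | ⟨q, k, hs⟩
    · exact Or.inl ((hs m).trans (hs n).symm)
    · exact Or.inr ⟨m * q, n * q, k, hs m, hs n, hr.2 _ _ q hmn⟩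

theorem rel_of_rowLift (h : IsMonomialRow row z j₀) {R : S → S → Prop} (hR : IsRightCongruence R)
    (hrR : ∀ m n, r m n → R (row m j₀) (row n j₀)) {x y : S} (hxy : RowLift row r x y) :
    R x y := by
  rcases hxy with rfl | ⟨m, n, j, rfl, rfl, hmn⟩
  · exact hR.1.refl x
  · obtain ⟨s, hs⟩ := h.exists_mul_eq_row 1 j
    simpa only [hs, mul_one] using hR.2 _ _ s (hrR m n hmn)

theorem fgRightCongruence_rowLift (h : IsMonomialRow row z j₀) (hr : FGRightCongruence r) :
    FGRightCongruence (RowLift row r) := by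
  obtain ⟨H, hfin, hcong, hH, hmin⟩ := hr
  refine ⟨(fun p => (row p.1 j₀, row p.2 j₀)) '' H, hfin.image _,
    h.isRightCongruence_rowLift hcong, ?_, fun R hR hHR _ _ => h.rel_of_rowLift hR ?_⟩
  · rintro _ ⟨p, hp, rfl⟩
    exact (h.rowLift_row_row_iff hcong).2 ⟨rfl, hH p hp⟩
  · have hcomap : IsRightCongruence fun m n => R (row m j₀) (row n j₀) :=
      hR.comap fun c => (h.exists_mul_eq_row c j₀).imp fun s hs m => (hs m).symm
    exact hmin _ hcomap fun p hp => hHR _ ⟨p, hp, rfl⟩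

theorem row_mem_cyclicSubact (h : IsMonomialRow row z j₀) (hx : x ∈ cyclicSubact r a) :
    row x j₀ ∈ cyclicSubact (RowLift row r) (row a j₀) := by
  obtain ⟨q, hxq⟩ := hx
  obtain ⟨s, hs⟩ := h.exists_mul_eq_row q j₀
  exact ⟨s, Or.inr ⟨x, a * q, j₀, rfl, hs a, hxq⟩⟩

theorem mem_cyclicSubact_of_row_mem (h : IsMonomialRow row z j₀) (hr : IsRightCongruence r)
    (hx : row x j ∈ cyclicSubact (RowLift row r) (row a k)) : x ∈ cyclicSubact r a := by
  obtain ⟨s, hxs⟩ := hx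
  rcases h.mul_eq_zero_or_row k s with hs | ⟨q, l, hs⟩
  · exact absurd (hs a ▸ hxs) h.not_rowLift_row_zero
  · exact ⟨q, ((h.rowLift_row_row_iff hr).1 (hs a ▸ hxs)).2⟩

theorem exists_eq_row_of_mem_cyclicSubact (h : IsMonomialRow row z j₀) {c : S}
    (hc : c ∈ cyclicSubact (RowLift row r) (row a k))
    (hx : row x j ∈ cyclicSubact (RowLift row r) c) : ∃ m l, c = row m l := by
  obtain ⟨t, hct | ⟨m, _, l, hm, _, _⟩⟩ := hc
  · rcases h.mul_eq_zero_or_row k t with ht | ⟨q, l, ht⟩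
    · obtain ⟨s, hxs⟩ := hx
      rw [hct, ht, h.zero_mul] at hxs
      exact absurd hxs h.not_rowLift_row_zero
    · exact ⟨a * q, l, hct.trans (ht a)⟩
  · exact ⟨m, l, hm⟩

theorem cyclicSubact_inter_eq_iUnion (h : IsMonomialRow row z j₀) (hr : IsRightCongruence r)
    {C : Set S}
    (hC : cyclicSubact (RowLift row r) (row a j₀) ∩ cyclicSubact (RowLift row r) (row b j₀) =
      ⋃ c ∈ C, cyclicSubact (RowLift row r) c) :
    cyclicSubact r a ∩ cyclicSubact r b = ⋃ m ∈ {m | ∃ j, row m j ∈ C}, cyclicSubact r m := by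
  have generator_mem : ∀ c ∈ C, c ∈ cyclicSubact (RowLift row r) (row a j₀) ∩
      cyclicSubact (RowLift row r) (row b j₀) := fun c hc =>
    hC ▸ Set.mem_biUnion hc (self_mem_cyclicSubact (h.isRightCongruence_rowLift hr) c)
  refine Set.Subset.antisymm (fun x ⟨hxa, hxb⟩ => ?_) (Set.iUnion₂_subset fun m ⟨j, hm⟩ => ?_)
  · have hx : row x j₀ ∈ ⋃ c ∈ C, cyclicSubact (RowLift row r) c :=
      hC ▸ ⟨h.row_mem_cyclicSubact hxa, h.row_mem_cyclicSubact hxb⟩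
    obtain ⟨c, hc, hxc⟩ := Set.mem_iUnion₂.1 hx
    obtain ⟨m, j, rfl⟩ := h.exists_eq_row_of_mem_cyclicSubact (generator_mem c hc).1 hxc
    exact Set.mem_biUnion ⟨j, hc⟩ (h.mem_cyclicSubact_of_row_mem hr hxc)
  · obtain ⟨hma, hmb⟩ := generator_mem _ hm
    exact Set.subset_inter
      (cyclicSubact_subset_of_mem hr (h.mem_cyclicSubact_of_row_mem hr hma))
      (cyclicSubact_subset_of_mem hr (h.mem_cyclicSubact_of_row_mem hr hmb))

theorem finite_setOf_row_mem (h : IsMonomialRow row z j₀) {C : Set S} (hC : C.Finite) :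
    {m | ∃ j, row m j ∈ C}.Finite := by
  refine ((hC.preimage h.injective2.uncurry.injOn).image Prod.fst).subset ?_
  rintro m ⟨j, hm⟩
  exact ⟨(m, j), hm, rfl⟩

theorem finite_setOf_row_pair_mem (h : IsMonomialRow row z j₀) {T : Set (S × S)} (hT : T.Finite) :
    {p : M × M | ∃ j, (row p.1 j, row p.2 j) ∈ T}.Finite := by
  refine ((h.finite_setOf_row_mem (hT.image Prod.fst)).prod
    (h.finite_setOf_row_mem (hT.image Prod.snd))).subset ?_
  rintro p ⟨j, hp⟩
  exact ⟨⟨j, _, hp, rfl⟩, ⟨j, _, hp, rfl⟩⟩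

theorem rowLift_row_mul_iff (h : IsMonomialRow row z j₀) (hr : IsRightCongruence r) (a : M) (j : J)
    (u v : S) :
    RowLift row r (row a j * u) (row a j * v) ↔
      RowLift row (fun m n => r (a * m) (a * n)) (row 1 j * u) (row 1 j * v) := by
  have hra := hr.comap_mul_left a
  rcases h.mul_eq_zero_or_row j u with hu | ⟨m, k, hu⟩ <;>
    rcases h.mul_eq_zero_or_row j v with hv | ⟨n, l, hv⟩ <;>
    simp only [hu, hv, one_mul]
  · exact iff_of_true (Or.inl rfl) (Or.inl rfl)
  · exact iff_of_false h.not_rowLift_zero_row h.not_rowLift_zero_row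
  · exact iff_of_false h.not_rowLift_row_zero h.not_rowLift_row_zero
  · rw [h.rowLift_row_row_iff hr, h.rowLift_row_row_iff hra]

theorem fgRightCongruence_of_rowLift (h : IsMonomialRow row z j₀) (hr : IsRightCongruence r)
    (hfg : FGRightCongruence fun u v => RowLift row r (row 1 j₀ * u) (row 1 j₀ * v)) :
    FGRightCongruence r := by
  obtain ⟨H, hfin, -, hH, hmin⟩ := hfg
  let T : Set (S × S) := (fun q => (row 1 j₀ * q.1, row 1 j₀ * q.2)) '' H
  refine ⟨{p | ∃ j, (row p.1 j, row p.2 j) ∈ T}, h.finite_setOf_row_pair_mem (hfin.image _), hr,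
    ?_, fun r' hr' hTr' m n hmn => ?_⟩
  · rintro p ⟨j, q, hq, hqp⟩
    obtain ⟨hq₁, hq₂⟩ := Prod.mk.inj hqp
    have hlift : RowLift row r (row p.1 j) (row p.2 j) := by
      simpa only [hq₁, hq₂] using hH q hq
    exact ((h.rowLift_row_row_iff hr).1 hlift).2
  · have generators_le : ∀ q ∈ H, RowLift row r' (row 1 j₀ * q.1) (row 1 j₀ * q.2) := by
      intro q hq
      rcases hH q hq with heq | ⟨m, n, j, hm, hn, -⟩
      · exact Or.inl heq
      · exact Or.inr ⟨m, n, j, hm, hn, hTr' (m, n) ⟨j, q, hq, Prod.ext hm hn⟩⟩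
    obtain ⟨u, hu⟩ := h.exists_mul_eq_row m j₀
    obtain ⟨v, hv⟩ := h.exists_mul_eq_row n j₀
    have huv : RowLift row r' (row 1 j₀ * u) (row 1 j₀ * v) := by
      refine hmin _ ((h.isRightCongruence_rowLift hr').comap_mul_left _) generators_le u v ?_
      simpa only [hu, hv, one_mul] using (h.rowLift_row_row_iff hr).2 ⟨rfl, hmn⟩
    simp only [hu, hv, one_mul] at huv
    exact ((h.rowLift_row_row_iff hr').1 huv).2

end IsMonomialRow

theorem isMonomialRow_brandt {M I S : Type*} [Monoid M] [Monoid S] {f : I × M × I → S} {z : S}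
    (hinj : Function.Injective f) (hfz : ∀ p, f p ≠ z)
    (hcover : ∀ s, s = 1 ∨ s = z ∨ ∃ p, f p = s)
    (hmul_eq : ∀ i a j b l, f (i, a, j) * f (j, b, l) = f (i, a * b, l))
    (hmul_ne : ∀ i a j k b l, j ≠ k → f (i, a, j) * f (k, b, l) = z)
    (hzmul : ∀ s, z * s = z ∧ s * z = z) (i : I) :
    IsMonomialRow (fun m j => f (i, m, j)) z i where
  injective2 m n j k heq := by simpa using hinj heq
  ne_zero _ _ := hfz _
  zero_mul s := (hzmul s).1
  mul_eq_zero_or_row j s := by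
    rcases hcover s with rfl | rfl | ⟨⟨k, n, l⟩, rfl⟩
    · exact Or.inr ⟨1, j, fun m => by simp only [mul_one]⟩
    · exact Or.inl fun m => (hzmul _).2
    · by_cases hjk : j = k
      · subst hjk
        exact Or.inr ⟨n, l, fun m => hmul_eq i m j n l⟩
      · exact Or.inl fun m => hmul_ne i m j k n l hjk
  exists_mul_eq_row n k := ⟨f (i, n, k), fun m => hmul_eq i m i n k⟩

theorem stmt12_general {M J S : Type*} [Monoid M] [Monoid S] {row : M → J → S} {z : S} {j₀ : J}
    (h : IsMonomialRow row z j₀) (hS : RightCoherent S) : RightCoherent M := by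
  intro r hfg a b
  have hr : IsRightCongruence r := hfg.isRightCongruence
  obtain ⟨⟨C, hC⟩, hann⟩ := hS _ (h.fgRightCongruence_rowLift hfg) (row a j₀) (row b j₀)
  constructor
  · have hfin := h.finite_setOf_row_mem C.finite_toSet
    refine ⟨hfin.toFinset, ?_⟩
    simp only [hfin.mem_toFinset]
    exact h.cyclicSubact_inter_eq_iUnion hr hC
  · simp only [h.rowLift_row_mul_iff hr a j₀] at hann
    exact h.fgRightCongruence_of_rowLift (hr.comap_mul_left a) hann

theorem stmt12
    {Mo : Type*} [Monoid Mo] {I : Type*} [Nonempty I]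
    {S : Type*} [Monoid S] (f : I × Mo × I → S) (z : S)
    (hinj : Function.Injective f)
    (hfz : ∀ p : I × Mo × I, f p ≠ z) (hf1 : ∀ p : I × Mo × I, f p ≠ 1) (hz1 : z ≠ 1)
    (hcover : ∀ s : S, s = 1 ∨ s = z ∨ ∃ p : I × Mo × I, f p = s)
    (hmul_eq : ∀ (i : I) (a : Mo) (j : I) (b : Mo) (l : I),
      f (i, a, j) * f (j, b, l) = f (i, a * b, l))
    (hmul_ne : ∀ (i : I) (a : Mo) (j k : I) (b : Mo) (l : I), j ≠ k →
      f (i, a, j) * f (k, b, l) = z)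
    (hzmul : ∀ s : S, z * s = z ∧ s * z = z)
    (hcoh : RightCoherent S) :
    RightCoherent Mo := by
  obtain ⟨i⟩ := ‹Nonempty I›
  exact stmt12_general (isMonomialRow_brandt hinj hfz hcover hmul_eq hmul_ne hzmul i) hcoh
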